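/- arXiv:1307.7324 — 2 statements merged into one kernel-verified Lean document; each statement's English description precedes it below -/
import Mathlib

section
/- For every complex number q with |q| < 1, φ(q)·a(q) = ∑_{k∈ℤ} (−1)^k q^{k(5k+3)/2}. (Equation (2.17), a Jacobi-triple-product evaluation of the first Rogers–Ramanujan product: ∏_{n≥1}(1−q^{5n})(1−q^{5n−1})(1−q^{5n−4}) = ∑_{k∈ℤ}(−1)^k q^{k(5k+3)/2}.) -/
open scoped BigOperators

/-- The Euler function `φ(q) = ∏_{n=1}^∞ (1 - q^n)`. -/
noncomputable def eulerPhi (q : ℂ) : ℂ := ∏' n : ℕ, (1 - q ^ (n + 1))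

/-- The first Rogers–Ramanujan series
`a(q) = ∏_{n=1}^∞ 1/((1 - q^{5n-2})(1 - q^{5n-3}))`. -/
noncomputable def rrA (q : ℂ) : ℂ :=
  ∏' n : ℕ, ((1 - q ^ (5 * n + 3)) * (1 - q ^ (5 * n + 2)))⁻¹

/-- The second Rogers–Ramanujan series
`b(q) = ∏_{n=1}^∞ 1/((1 - q^{5n-1})(1 - q^{5n-4}))`. -/
noncomputable def rrB (q : ℂ) : ℂ :=
  ∏' n : ℕ, ((1 - q ^ (5 * n + 4)) * (1 - q ^ (5 * n + 1)))⁻¹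

/-- `G(q) = ∏_{n=1}^∞ (1-q^{15n})(1-q^{15n-7})(1-q^{15n-8})
          - q ∏_{n=1}^∞ (1-q^{15n})(1-q^{15n-13})(1-q^{15n-2})`. -/
noncomputable def Gf (q : ℂ) : ℂ :=
  (∏' n : ℕ, (1 - q ^ (15 * n + 15)) * (1 - q ^ (15 * n + 8)) * (1 - q ^ (15 * n + 7)))
  - q * ∏' n : ℕ, (1 - q ^ (15 * n + 15)) * (1 - q ^ (15 * n + 2)) * (1 - q ^ (15 * n + 13))

/-- `H(q) = ∏_{n=1}^∞ (1-q^{15n})(1-q^{15n-4})(1-q^{15n-11})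
          + q ∏_{n=1}^∞ (1-q^{15n})(1-q^{15n-14})(1-q^{15n-1})`. -/
noncomputable def Hf (q : ℂ) : ℂ :=
  (∏' n : ℕ, (1 - q ^ (15 * n + 15)) * (1 - q ^ (15 * n + 11)) * (1 - q ^ (15 * n + 4)))
  + q * ∏' n : ℕ, (1 - q ^ (15 * n + 15)) * (1 - q ^ (15 * n + 1)) * (1 - q ^ (15 * n + 14))

open Filter Topology

namespace JTP

/-- Partial Euler product. -/
noncomputable def P (p : ℂ) (n : ℕ) : ℂ := ∏ i ∈ Finset.range n, (1 - p ^ (i + 1))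

/-- Reciprocal partial Euler product, zero at negative integers. -/
noncomputable def r (p : ℂ) (n : ℤ) : ℂ := if n < 0 then 0 else (P p n.toNat)⁻¹

/-- The summand. -/
noncomputable def T (q : ℂ) (k : ℤ) : ℂ := (-1 : ℂ) ^ k * q ^ (k * (5 * k + 3) / 2)

lemma one_sub_ne {p : ℂ} (hp : ‖p‖ < 1) (n : ℕ) (hn : n ≠ 0) : 1 - p ^ n ≠ 0 := by
  intro h
  have h1 : p ^ n = 1 := (sub_eq_zero.mp h).symm
  have h2 : ‖p‖ ^ n = 1 := by rw [← norm_pow, h1, norm_one]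
  have h3 := pow_lt_one₀ (norm_nonneg p) hp hn
  linarith

lemma P_ne {p : ℂ} (hp : ‖p‖ < 1) (n : ℕ) : P p n ≠ 0 :=
  Finset.prod_ne_zero_iff.mpr fun i _ => one_sub_ne hp (i + 1) (by omega)

lemma P_succ (p : ℂ) (n : ℕ) : P p (n + 1) = P p n * (1 - p ^ (n + 1)) := by
  simp [P, Finset.prod_range_succ]

lemma r_sub {p : ℂ} (hp : ‖p‖ < 1) (n : ℤ) : r p (n - 1) = (1 - p ^ n) * r p n := by
  rcases lt_trichotomy n 0 with h | h | h
  · have h' : n - 1 < 0 := by omega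
    simp [r, h, h']
  · subst h
    simp [r]
  · obtain ⟨m, rfl⟩ : ∃ m : ℕ, n = (m : ℤ) + 1 := ⟨(n - 1).toNat, by omega⟩
    have h1 : ¬ ((m : ℤ) + 1 < 0) := by omega
    have h2 : ¬ ((m : ℤ) < 0) := by omega
    have h3 : ((m : ℤ) + 1).toNat = m + 1 := by omega
    have h4 : p ^ ((m : ℤ) + 1) = p ^ (m + 1) := by exact_mod_cast zpow_natCast p (m + 1)
    have hP := P_ne hp m
    have hf := one_sub_ne hp (m + 1) (by omega)
    simp only [r, add_sub_cancel_right, h1, h2, if_false, h3, h4, P_succ, Int.toNat_natCast]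
    field_simp

lemma T_succ {q : ℂ} (hq : q ≠ 0) (k : ℤ) : T q (k + 1) = - T q k * (q ^ 5) ^ k * q ^ 4 := by
  have he : (k + 1) * (5 * (k + 1) + 3) / 2 = k * (5 * k + 3) / 2 + (5 * k + 4) := by
    have : (k + 1) * (5 * (k + 1) + 3) = k * (5 * k + 3) + (5 * k + 4) * 2 := by ring
    rw [this, Int.add_mul_ediv_right _ _ (by norm_num)]
  have h5 : (q ^ 5) ^ k = q ^ (5 * k) := by
    rw [zpow_mul]; norm_cast
  have h4 : q ^ (4 : ℤ) = q ^ 4 := by norm_cast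
  rw [T, T, he, zpow_add₀ hq, zpow_add₀ hq, zpow_add₀ (by norm_num : (-1 : ℂ) ≠ 0), h5, h4]
  ring

lemma key (p X Y : ℂ) (hp : p ≠ 0) :
    (1 - X * Y / p) * (1 - X * Y) = (1 + X * Y / p) * (1 - X) * (1 - Y)
      + X * (1 - Y) * (1 - Y / p) + Y * (1 - X) * (1 - X / p) := by
  field_simp
  ring

/-- Coefficients. -/
noncomputable def c (p : ℂ) (N : ℕ) (k : ℤ) : ℂ := P p (2 * N) * r p (N - k) * r p (N + k)

lemma c_succ {p : ℂ} (hp : ‖p‖ < 1) (hp0 : p ≠ 0) (N : ℕ) (k : ℤ) :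
    c p (N + 1) k = (1 + p ^ (2 * N + 1)) * c p N k + p ^ (N + 1 - k : ℤ) * c p N (k - 1)
      + p ^ (N + 1 + k : ℤ) * c p N (k + 1) := by
  have a1 : r p (N - k) = (1 - p ^ (N + 1 - k : ℤ)) * r p (N + 1 - k) := by
    rw [← r_sub hp]; congr 1; ring
  have a2 : r p (N + k) = (1 - p ^ (N + 1 + k : ℤ)) * r p (N + 1 + k) := by
    rw [← r_sub hp]; congr 1; ring
  have a3 : r p (N + (k - 1)) = (1 - p ^ (N + 1 + k : ℤ) / p) * r p (N + k) := by
    rw [div_eq_mul_inv, ← zpow_sub_one₀ hp0,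
      show (N : ℤ) + 1 + k - 1 = N + k by ring, ← r_sub hp]; congr 1; ring
  have a4 : r p (N - (k + 1)) = (1 - p ^ (N + 1 - k : ℤ) / p) * r p (N - k) := by
    rw [div_eq_mul_inv, ← zpow_sub_one₀ hp0,
      show (N : ℤ) + 1 - k - 1 = N - k by ring, ← r_sub hp]; congr 1; ring
  have a5 : (N : ℤ) - (k - 1) = N + 1 - k := by ring
  have a6 : (N : ℤ) + (k + 1) = N + 1 + k := by ring
  have a7 : P p (2 * (N + 1)) = P p (2 * N) * (1 - p ^ (2 * N + 1)) * (1 - p ^ (2 * N + 2)) := by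
    rw [show 2 * (N + 1) = 2 * N + 1 + 1 by ring, P_succ, P_succ]
  have hXY : p ^ (N + 1 - k : ℤ) * p ^ (N + 1 + k : ℤ) = p ^ (2 * N + 2) := by
    rw [← zpow_add₀ hp0, ← zpow_natCast]; congr 1; push_cast; ring
  have hXYp : p ^ (2 * N + 1) = p ^ (N + 1 - k : ℤ) * p ^ (N + 1 + k : ℤ) / p := by
    rw [hXY]; field_simp; ring
  have K := key p (p ^ (N + 1 - k : ℤ)) (p ^ (N + 1 + k : ℤ)) hp0
  simp only [c]
  push_cast
  rw [a7, a3, a4, a5, a6, a1, a2, hXYp, ← hXY]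
  linear_combination P p (2 * N) * r p (N + 1 - k) * r p (N + 1 + k) * K

lemma hasSum_congr_aux {f g : ℤ → ℂ} {a b : ℂ} (h : HasSum f a) (hf : ∀ k, g k = f k)
    (hb : b = a) : HasSum g b := by
  rw [funext hf, hb]; exact h

lemma finite_jtp {q : ℂ} (hq : ‖q‖ < 1) (hq0 : q ≠ 0) (N : ℕ) :
    HasSum (fun k => T q k * c (q ^ 5) N k)
      (∏ n ∈ Finset.range N, (1 - q ^ (5 * n + 4)) * (1 - q ^ (5 * n + 1))) := by
  have hp : ‖q ^ 5‖ < 1 := by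
    rw [norm_pow]; exact pow_lt_one₀ (norm_nonneg q) hq (by norm_num)
  have hp0 : q ^ 5 ≠ 0 := pow_ne_zero _ hq0
  induction N with
  | zero =>
    have h := hasSum_single (f := fun k => T q k * c (q ^ 5) 0 k) 0 (by
      intro k hk
      rcases lt_or_gt_of_ne hk with h | h
      · simp [c, r, h]
      · simp [c, r, h])
    simpa [T, c, r, P] using h
  | succ N ih =>
    have s1 := (Equiv.subRight (1 : ℤ)).hasSum_iff.mpr ih
    have s2 := (Equiv.addRight (1 : ℤ)).hasSum_iff.mpr ih
    have s := ((ih.mul_left (1 + (q ^ 5) ^ (2 * N + 1))).sub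
      (s1.mul_left ((q ^ 5) ^ N * q ^ 4))).sub (s2.mul_left ((q ^ 5) ^ N * q))
    rw [Finset.prod_range_succ]
    refine (hasSum_congr_aux s ?_ ?_)
    · intro k
      have hu : (q ^ 5) ^ k ≠ 0 := zpow_ne_zero _ hp0
      have t1 := T_succ hq0 k
      have t2 : T q k = _ := (congrArg (T q) (sub_add_cancel k 1).symm).trans (T_succ hq0 (k - 1))
      simp only [Function.comp, Equiv.subRight_apply, Equiv.coe_addRight]
      have x1 : (q ^ 5) ^ (N + 1 - k : ℤ) * T q k = -((q ^ 5) ^ N * q ^ 4 * T q (k - 1)) := by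
        have : (q ^ 5) ^ (N + 1 - k : ℤ) * (q ^ 5) ^ (k - 1) = (q ^ 5) ^ N := by
          rw [← zpow_add₀ hp0, ← zpow_natCast (q ^ 5) N]; congr 1; ring
        rw [t2, ← this]; ring
      have x2 : (q ^ 5) ^ (N + 1 + k : ℤ) * T q k = -((q ^ 5) ^ N * q * T q (k + 1)) := by
        have : (q ^ 5) ^ (N + 1 + k : ℤ) = (q ^ 5) ^ N * q ^ 5 * (q ^ 5) ^ k := by
          rw [zpow_add₀ hp0, zpow_add₀ hp0, zpow_natCast, zpow_one]
        rw [t1, this]; ring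
      rw [c_succ hp hp0]
      linear_combination c (q ^ 5) N (k - 1) * x1 + c (q ^ 5) N (k + 1) * x2
    · ring

lemma summable_aux {q : ℂ} (hq : ‖q‖ < 1) (f : ℕ → ℕ) (hf : ∀ n, n ≤ f n) :
    Summable fun n => ‖-q ^ (f n)‖ := by
  refine Summable.of_nonneg_of_le (fun _ => norm_nonneg _) (fun n => ?_)
    (summable_geometric_of_lt_one (norm_nonneg q) hq)
  rw [norm_neg, norm_pow]
  exact pow_le_pow_of_le_one (norm_nonneg q) hq.le (hf n)

lemma mult_aux {q : ℂ} (hq : ‖q‖ < 1) (f : ℕ → ℕ) (hf : ∀ n, n ≤ f n) :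
    Multipliable fun n => (1 - q ^ (f n)) := by
  simpa [sub_eq_add_neg] using multipliable_one_add_of_summable (summable_aux hq f hf)

lemma ne_aux {q : ℂ} (hq : ‖q‖ < 1) (f : ℕ → ℕ) (hf : ∀ n, n < f n) :
    ∏' n, (1 - q ^ (f n)) ≠ 0 := by
  have := tprod_one_add_ne_zero_of_summable (f := fun n => -q ^ (f n))
    (fun i => by
      rw [← sub_eq_add_neg]; exact one_sub_ne hq _ (by have := hf i; omega))
    (summable_aux hq f fun n => (hf n).le)
  simpa [sub_eq_add_neg] using this

lemma exp_ge (k : ℤ) : (k.natAbs : ℤ) ≤ k * (5 * k + 3) / 2 := by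
  rw [Int.le_ediv_iff_mul_le (by norm_num)]
  rcases lt_trichotomy k 0 with h | h | h
  · have : (k.natAbs : ℤ) = -k := by omega
    rw [this]; nlinarith
  · subst h; simp
  · have : (k.natAbs : ℤ) = k := by omega
    rw [this]; nlinarith

lemma summable_natAbs {x : ℝ} (h0 : 0 ≤ x) (h1 : x < 1) :
    Summable fun k : ℤ => x ^ k.natAbs := by
  apply Summable.of_nat_of_neg <;> simpa using summable_geometric_of_lt_one h0 h1

lemma norm_T_le {q : ℂ} (hq : ‖q‖ < 1) (k : ℤ) : ‖T q k‖ ≤ ‖q‖ ^ k.natAbs := by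
  have h := exp_ge k
  obtain ⟨m, hm⟩ : ∃ m : ℕ, k * (5 * k + 3) / 2 = m :=
    ⟨(k * (5 * k + 3) / 2).toNat, by omega⟩
  rw [hm] at h
  have h' : k.natAbs ≤ m := by exact_mod_cast h
  simp only [T, hm, norm_mul, norm_zpow, norm_neg, norm_one, one_zpow, one_mul, zpow_natCast,
    norm_pow]
  exact pow_le_pow_of_le_one (norm_nonneg q) hq.le h'

lemma P_tendsto {p : ℂ} (hp : ‖p‖ < 1) :
    Tendsto (P p) atTop (𝓝 (∏' n : ℕ, (1 - p ^ (n + 1)))) :=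
  (mult_aux hp (fun n => n + 1) (by simp)).tendsto_prod_tprod_nat

lemma r_bound {p : ℂ} (hp : ‖p‖ < 1) : ∃ C, ∀ n, ‖r p n‖ ≤ C := by
  have h := (P_tendsto hp).inv₀ (ne_aux hp (fun n => n + 1) (by simp))
  obtain ⟨C, hC⟩ := h.norm.bddAbove_range
  refine ⟨C, fun n => ?_⟩
  have hC' : ∀ n, ‖(P p n)⁻¹‖ ≤ C := fun n => hC ⟨n, rfl⟩
  unfold r
  split_ifs
  · simpa using (norm_nonneg _).trans (hC' 0)
  · exact hC' _

lemma r_tendsto {p : ℂ} (hp : ‖p‖ < 1) :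
    Tendsto (r p) atTop (𝓝 (∏' n : ℕ, (1 - p ^ (n + 1)))⁻¹) := by
  have h := (P_tendsto hp).inv₀ (ne_aux hp (fun n => n + 1) (by simp))
  have ht : Tendsto Int.toNat atTop atTop :=
    tendsto_atTop.mpr fun b => (eventually_ge_atTop (b : ℤ)).mono fun n hn => by omega
  refine (h.comp ht).congr' ?_
  filter_upwards [eventually_ge_atTop (0 : ℤ)] with n hn
  simp [r, not_lt.mpr hn]

lemma c_tendsto {p : ℂ} (hp : ‖p‖ < 1) (k : ℤ) :
    Tendsto (fun N => c p N k) atTop (𝓝 (∏' n : ℕ, (1 - p ^ (n + 1)))⁻¹) := by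
  have hne := ne_aux hp (fun n => n + 1) (by simp)
  have hN : Tendsto (fun N : ℕ => (N : ℤ)) atTop atTop := tendsto_natCast_atTop_atTop
  have h1 := (P_tendsto hp).comp (tendsto_id.const_mul_atTop' (show 0 < 2 by norm_num))
  have h2 := (r_tendsto hp).comp (tendsto_atTop_add_const_right _ (-k) hN)
  have h3 := (r_tendsto hp).comp (tendsto_atTop_add_const_right _ k hN)
  have h := (h1.mul h2).mul h3
  rw [mul_inv_cancel₀ hne, one_mul] at h
  exact h

lemma c_bound {p : ℂ} (hp : ‖p‖ < 1) : ∃ C, ∀ N k, ‖c p N k‖ ≤ C := by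
  obtain ⟨C, hC⟩ := r_bound hp
  obtain ⟨D, hD⟩ := (P_tendsto hp).norm.bddAbove_range
  have hD' : ∀ n, ‖P p n‖ ≤ D := fun n => hD ⟨n, rfl⟩
  have hC0 := (norm_nonneg _).trans (hC 0)
  have hD0 := (norm_nonneg _).trans (hD' 0)
  refine ⟨D * C * C, fun N k => ?_⟩
  rw [c, norm_mul, norm_mul]
  gcongr
  · exact hD' _
  · exact hC _
  · exact hC _

lemma jtp_tendsto {q : ℂ} (hq : ‖q‖ < 1) (hq0 : q ≠ 0) :
    Tendsto (fun N => P (q ^ 5) N *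
      ∏ n ∈ Finset.range N, (1 - q ^ (5 * n + 4)) * (1 - q ^ (5 * n + 1))) atTop
      (𝓝 (∑' k, T q k)) := by
  have hp : ‖q ^ 5‖ < 1 := by
    rw [norm_pow]; exact pow_lt_one₀ (norm_nonneg q) hq (by norm_num)
  have hne := ne_aux hp (fun n => n + 1) (by simp)
  obtain ⟨C, hC⟩ := c_bound hp
  have h := tendsto_tsum_of_dominated_convergence (𝓕 := atTop)
    (f := fun N k => T q k * c (q ^ 5) N k)
    (g := fun k => T q k * (∏' n : ℕ, (1 - (q ^ 5) ^ (n + 1)))⁻¹)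
    (bound := fun k : ℤ => ‖q‖ ^ k.natAbs * C)
    ((summable_natAbs (norm_nonneg q) hq).mul_right C)
    (fun k => (c_tendsto hp k).const_mul _)
    (Eventually.of_forall fun N k => by
      rw [norm_mul]
      exact mul_le_mul (norm_T_le hq k) (hC N k) (norm_nonneg _) (by positivity))
  simp only [(finite_jtp hq hq0 _).tsum_eq, tsum_mul_right] at h
  have h' := (P_tendsto hp).mul h
  convert h' using 2
  field_simp

lemma prod_five (q : ℂ) (N : ℕ) : P q (5 * N) = P (q ^ 5) N *
    (∏ n ∈ Finset.range N, (1 - q ^ (5 * n + 4)) * (1 - q ^ (5 * n + 1))) *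
    (∏ n ∈ Finset.range N, (1 - q ^ (5 * n + 3)) * (1 - q ^ (5 * n + 2))) := by
  induction N with
  | zero => simp [P]
  | succ N ih =>
    rw [show 5 * (N + 1) = 5 * N + 1 + 1 + 1 + 1 + 1 by ring]
    simp only [P_succ, ih, Finset.prod_range_succ]
    ring

lemma main {q : ℂ} (hq : ‖q‖ < 1) (hq0 : q ≠ 0) : eulerPhi q * rrA q = ∑' k, T q k := by
  have m3 := mult_aux hq (fun n => 5 * n + 3) (fun n => by omega)
  have m2 := mult_aux hq (fun n => 5 * n + 2) (fun n => by omega)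
  have n3 := ne_aux hq (fun n => 5 * n + 3) (fun n => by omega)
  have n2 := ne_aux hq (fun n => 5 * n + 2) (fun n => by omega)
  have hi := (m3.hasProd.mul m2.hasProd).inv₀ (mul_ne_zero n3 n2)
  have hA : Tendsto (fun N => ∏ n ∈ Finset.range N,
      ((1 - q ^ (5 * n + 3)) * (1 - q ^ (5 * n + 2)))⁻¹) atTop (𝓝 (rrA q)) :=
    hi.multipliable.tendsto_prod_tprod_nat
  have hE := (P_tendsto hq).comp (tendsto_id.const_mul_atTop' (show 0 < 5 by norm_num))
  refine tendsto_nhds_unique (hE.mul hA) ((jtp_tendsto hq hq0).congr fun N => ?_)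
  have hD : (∏ n ∈ Finset.range N, (1 - q ^ (5 * n + 3)) * (1 - q ^ (5 * n + 2))) ≠ 0 :=
    Finset.prod_ne_zero_iff.mpr fun i _ =>
      mul_ne_zero (one_sub_ne hq _ (by omega)) (one_sub_ne hq _ (by omega))
  simp only [Function.comp, id]
  rw [prod_five, Finset.prod_inv_distrib, mul_assoc _ _ (_⁻¹), mul_inv_cancel₀ hD, mul_one]

lemma main_zero : eulerPhi 0 * rrA 0 = ∑' k, T 0 k := by
  rw [tsum_eq_single (0 : ℤ)]
  · simp [eulerPhi, rrA, T]
  · intro k hk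
    have := exp_ge k
    have h : k * (5 * k + 3) / 2 ≠ 0 := by omega
    rw [T, zero_zpow _ h, mul_zero]

end JTP

theorem phi_a_jacobi_triple_product (q : ℂ) (hq : ‖q‖ < 1) :
    eulerPhi q * rrA q = ∑' k : ℤ, (-1 : ℂ) ^ k * q ^ (k * (5 * k + 3) / 2) := by
  by_cases h : q = 0
  · subst h; exact JTP.main_zero
  · exact JTP.main hq h
end

section
/- For every complex number q with |q| < 1, φ(q³)² = G(q³)·φ(q⁹)·b(q⁹) − q³·H(q³)·φ(q⁹)·a(q⁹). (The reduced form of the Ramanujan identity obtained in the proof of Theorem 3.1 after discarding the vanishing residue classes, equations (3.25)–(3.29).) -/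
open scoped BigOperators

open Filter Topology

namespace RRed

noncomputable def qP (Q : ℂ) (m : ℕ) : ℂ := ∏ i ∈ Finset.range m, (1 - Q ^ (i + 1))

noncomputable def qR (Q : ℂ) (m : ℤ) : ℂ := if 0 ≤ m then (qP Q m.toNat)⁻¹ else 0

lemma one_sub_ne {Q : ℂ} (hQ : ‖Q‖ < 1) {n : ℕ} (hn : n ≠ 0) : 1 - Q ^ n ≠ 0 := by
  intro h
  have h1 : ‖Q ^ n‖ < 1 := by
    rw [norm_pow]; exact pow_lt_one₀ (norm_nonneg _) hQ hn
  rw [← sub_eq_zero.mp h] at h1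
  simp at h1

lemma qP_ne {Q : ℂ} (hQ : ‖Q‖ < 1) (m : ℕ) : qP Q m ≠ 0 :=
  Finset.prod_ne_zero_iff.mpr fun _ _ => one_sub_ne hQ (Nat.succ_ne_zero _)

lemma qR_rec {Q : ℂ} (hQ : ‖Q‖ < 1) (m : ℤ) : qR Q m = (1 - Q ^ (m + 1)) * qR Q (m + 1) := by
  rcases lt_trichotomy m (-1) with h | h | h
  · simp [qR, show ¬ (0 ≤ m) by omega, show ¬ (0 ≤ m + 1) by omega]
  · subst h; simp [qR]
  · obtain ⟨k, rfl⟩ := Int.eq_ofNat_of_zero_le (show 0 ≤ m by omega)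
    have h2 : ((k : ℤ) + 1).toNat = k + 1 := by omega
    have h3 : qP Q (k + 1) = qP Q k * (1 - Q ^ (k + 1)) := Finset.prod_range_succ _ _
    have h4 := one_sub_ne hQ (Nat.succ_ne_zero k)
    have h5 := qP_ne hQ k
    simp only [qR, show (0 : ℤ) ≤ k by omega, show (0 : ℤ) ≤ k + 1 by omega, if_true, h2,
      Int.toNat_natCast, h3]
    have h6 : Q ^ ((k : ℤ) + 1) = Q ^ (k + 1) := by exact_mod_cast zpow_natCast Q (k + 1)
    rw [h6]
    rw [Nat.succ_eq_add_one] at h4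
    field_simp

lemma hs_congr {f g : ℤ → ℂ} {s s' : ℂ} (h : HasSum f s) (h1 : ∀ n, g n = f n) (h2 : s' = s) :
    HasSum g s' := by
  rw [h2, funext h1]; exact h

lemma fin_jtp {Q z : ℂ} (hQ : ‖Q‖ < 1) (hQ0 : Q ≠ 0) (hz : z ≠ 0) {t : ℤ → ℂ} (h0 : t 0 = 1)
    (ht : ∀ n, t (n + 1) = -z * Q ^ n * t n) (a b : ℕ) :
    HasSum (fun n : ℤ => t n * qR Q (a + n) * qR Q (b - n))
      ((∏ i ∈ Finset.range b, (1 - z * Q ^ i)) * (∏ i ∈ Finset.range a, (1 - z⁻¹ * Q ^ (i + 1)))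
        / qP Q (a + b)) := by
  induction b with
  | zero =>
    induction a with
    | zero =>
      convert hasSum_single (f := fun n : ℤ => t n * qR Q ((0 : ℕ) + n) * qR Q ((0 : ℕ) - n)) 0 ?_
        using 1
      · simp [qR, qP, h0]
      · intro n hn
        rcases lt_or_gt_of_ne hn with h | h
        · simp [qR, h.not_ge]
        · simp [qR, h.not_ge]
    | succ a ih =>
      have ih2 := (Equiv.hasSum_iff (Equiv.addRight (1 : ℤ))).mpr ih
      have := (ih.sub (ih2.mul_left (z⁻¹ * Q ^ (a + 1)))).div_const (1 - Q ^ (a + 0 + 1))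
      have h4 := one_sub_ne hQ (Nat.succ_ne_zero (a + 0))
      rw [Nat.succ_eq_add_one] at h4
      refine hs_congr this ?_ ?_
      · intro n
        simp only [Function.comp, Equiv.coe_addRight]
        rw [ht n, eq_div_iff h4, qR_rec hQ (a + n)]
        have e1 : ((0 : ℕ) : ℤ) - n = ((0 : ℕ) : ℤ) - (n + 1) + 1 := by ring
        rw [qR_rec hQ (((0 : ℕ) : ℤ) - (n + 1)), ← e1]
        have e2 : (a : ℤ) + (n + 1) = a + n + 1 := by ring
        have e3 : (((a + 1 : ℕ) : ℤ)) + n = a + n + 1 := by push_cast; ring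
        rw [e2, e3]
        have e4 : Q ^ ((a : ℤ) + n + 1) = Q ^ a * Q ^ n * Q := by
          rw [zpow_add₀ hQ0, zpow_add₀ hQ0, zpow_natCast, zpow_one]
        have e5 : Q ^ (((0 : ℕ) : ℤ) - n) = (Q ^ n)⁻¹ := by simp
        have e6 : Q ^ n ≠ 0 := zpow_ne_zero _ hQ0
        rw [e4, e5]
        field_simp
        ring
      · rw [Finset.prod_range_succ _ a, show a + 1 + 0 = (a + 0) + 1 by ring]
        have h3 : qP Q (a + 0 + 1) = qP Q (a + 0) * (1 - Q ^ (a + 0 + 1)) :=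
          Finset.prod_range_succ _ _
        have h5 := qP_ne hQ (a + 0)
        rw [h3]
        field_simp
  | succ b ih =>
    have ih2 := (Equiv.hasSum_iff (Equiv.subRight (1 : ℤ))).mpr ih
    have := (ih.sub (ih2.mul_left (z * Q ^ b))).div_const (1 - Q ^ (a + b + 1))
    have h4 := one_sub_ne hQ (Nat.succ_ne_zero (a + b))
    rw [Nat.succ_eq_add_one] at h4
    refine hs_congr this ?_ ?_
    · intro n
      obtain ⟨n, rfl⟩ : ∃ m, n = m + 1 := ⟨n - 1, by ring⟩
      simp only [Function.comp, Equiv.subRight_apply, add_sub_cancel_right]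
      rw [ht n, eq_div_iff h4]
      have e1 : (b : ℤ) - (n + 1) + 1 = b - n := by ring
      rw [qR_rec hQ ((b : ℤ) - (n + 1)), e1, qR_rec hQ ((a : ℤ) + n)]
      have e2 : (a : ℤ) + (n + 1) = a + n + 1 := by ring
      have e3 : ((b + 1 : ℕ) : ℤ) - (n + 1) = b - n := by push_cast; ring
      rw [e2, e3]
      have e4 : Q ^ ((a : ℤ) + n + 1) = Q ^ a * Q ^ n * Q := by
        rw [zpow_add₀ hQ0, zpow_add₀ hQ0, zpow_natCast, zpow_one]
      have e5 : Q ^ ((b : ℤ) - n) = Q ^ b * (Q ^ n)⁻¹ := by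
        rw [zpow_sub₀ hQ0, zpow_natCast, div_eq_mul_inv]
      have e6 : Q ^ n ≠ 0 := zpow_ne_zero _ hQ0
      rw [e4, e5]
      field_simp
      ring
    · rw [Finset.prod_range_succ _ b, ← add_assoc a b 1]
      have h3 : qP Q (a + b + 1) = qP Q (a + b) * (1 - Q ^ (a + b + 1)) :=
        Finset.prod_range_succ _ _
      have h5 := qP_ne hQ (a + b)
      rw [h3]
      field_simp

lemma summable_aux {Q z : ℂ} (hQ : ‖Q‖ < 1) {f : ℕ → ℂ} (hf : ∀ n, f n ≠ 0)
    (h : ∀ n, f (n + 1) = -z * Q ^ n * f n) : Summable f := by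
  apply summable_of_ratio_test_tendsto_lt_one (l := 0) zero_lt_one (Eventually.of_forall hf)
  have : (fun n => ‖f (n + 1)‖ / ‖f n‖) = fun n => ‖z‖ * ‖Q‖ ^ n := by
    ext n
    have := norm_ne_zero_iff.mpr (hf n)
    rw [h]
    simp only [norm_mul, norm_neg, norm_pow]
    field_simp
  rw [this]
  simpa using (tendsto_pow_atTop_nhds_zero_of_lt_one (norm_nonneg Q) hQ).const_mul ‖z‖

lemma t_ne {Q z : ℂ} (hQ0 : Q ≠ 0) (hz : z ≠ 0) {t : ℤ → ℂ} (h0 : t 0 = 1)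
    (ht : ∀ n, t (n + 1) = -z * Q ^ n * t n) (n : ℤ) : t n ≠ 0 := by
  induction n using Int.induction_on with
  | zero => simp [h0]
  | succ n ih =>
    rw [ht]
    exact mul_ne_zero (mul_ne_zero (neg_ne_zero.mpr hz) (zpow_ne_zero _ hQ0)) ih
  | pred n ih =>
    intro h
    apply ih
    have := ht (-(n : ℤ) - 1)
    rw [h] at this
    simpa using this

lemma t_summable {Q z : ℂ} (hQ : ‖Q‖ < 1) (hQ0 : Q ≠ 0) (hz : z ≠ 0) {t : ℤ → ℂ} (h0 : t 0 = 1)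
    (ht : ∀ n, t (n + 1) = -z * Q ^ n * t n) : Summable t := by
  have hne := t_ne hQ0 hz h0 ht
  apply Summable.of_nat_of_neg
  · apply summable_aux hQ (z := z) (fun n => hne n)
    intro n
    exact_mod_cast ht n
  · apply summable_aux hQ (z := z⁻¹ * Q) (fun n => hne _)
    intro n
    have := ht (-((n + 1 : ℕ) : ℤ))
    have e1 : -((n + 1 : ℕ) : ℤ) + 1 = -n := by push_cast; ring
    rw [e1] at this
    rw [this]
    have e2 : Q ^ (-((n + 1 : ℕ) : ℤ)) = (Q ^ n * Q)⁻¹ := by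
      rw [zpow_neg, zpow_natCast, pow_succ]
    rw [e2]
    have : Q ^ n ≠ 0 := pow_ne_zero _ hQ0
    field_simp

lemma mult_one_sub {Q z : ℂ} (hQ : ‖Q‖ < 1) : Multipliable fun i : ℕ => (1 - z * Q ^ i) := by
  simp only [sub_eq_add_neg]
  apply multipliable_one_add_of_summable
  simp only [norm_neg, norm_mul, norm_pow]
  exact (summable_geometric_of_lt_one (norm_nonneg _) hQ).mul_left _

lemma tprod_ne {Q z : ℂ} (hQ : ‖Q‖ < 1) (h : ∀ i : ℕ, 1 - z * Q ^ i ≠ 0) :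
    ∏' i : ℕ, (1 - z * Q ^ i) ≠ 0 := by
  simp only [sub_eq_add_neg] at h ⊢
  apply tprod_one_add_ne_zero_of_summable h
  simp only [norm_neg, norm_mul, norm_pow]
  exact (summable_geometric_of_lt_one (norm_nonneg _) hQ).mul_left _

lemma jtp {Q z : ℂ} (hQ : ‖Q‖ < 1) (hQ0 : Q ≠ 0) (hz : z ≠ 0) {t : ℤ → ℂ} (h0 : t 0 = 1)
    (ht : ∀ n, t (n + 1) = -z * Q ^ n * t n) :
    ∑' n, t n = (∏' i : ℕ, (1 - Q * Q ^ i)) * (∏' i : ℕ, (1 - z * Q ^ i)) *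
      ∏' i : ℕ, (1 - (z⁻¹ * Q) * Q ^ i) := by
  have hP : Tendsto (qP Q) atTop (𝓝 (∏' i : ℕ, (1 - Q * Q ^ i))) := by
    have := (mult_one_sub (z := Q) hQ).hasProd.tendsto_prod_nat
    refine this.congr fun n => ?_
    simp only [qP, pow_succ']
  have hA := (mult_one_sub (z := z) hQ).hasProd.tendsto_prod_nat
  have hB := (mult_one_sub (z := z⁻¹ * Q) hQ).hasProd.tendsto_prod_nat
  have hne : ∏' i : ℕ, (1 - Q * Q ^ i) ≠ 0 := by
    apply tprod_ne hQ
    intro i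
    rw [← pow_succ']
    exact one_sub_ne hQ (Nat.succ_ne_zero _)
  set P := ∏' i : ℕ, (1 - Q * Q ^ i)
  have hR : Tendsto (fun n : ℕ => (qP Q n)⁻¹) atTop (𝓝 P⁻¹) := hP.inv₀ hne
  obtain ⟨C, hC⟩ : ∃ C, ∀ m, ‖qR Q m‖ ≤ C := by
    obtain ⟨C, hC⟩ := (Metric.isBounded_range_of_tendsto _ hR).exists_norm_le
    refine ⟨C, fun m => ?_⟩
    unfold qR
    split_ifs
    · exact hC _ ⟨_, rfl⟩
    · simpa using (norm_nonneg _).trans (hC _ ⟨0, rfl⟩)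
  have hC0 : 0 ≤ C := (norm_nonneg _).trans (hC 0)
  have hRp : ∀ n : ℤ, Tendsto (fun N : ℕ => qR Q (N + n)) atTop (𝓝 P⁻¹) := by
    intro n
    have h1 : Tendsto (fun N : ℕ => ((N : ℤ) + n).toNat) atTop atTop := by
      rw [tendsto_atTop]
      intro b
      filter_upwards [eventually_ge_atTop (b + n.natAbs)] with N hN
      omega
    refine (hR.comp h1).congr' ?_
    filter_upwards [eventually_ge_atTop n.natAbs] with N hN
    simp only [qR, Function.comp]
    rw [if_pos (by omega)]
  have key := tendsto_tsum_of_dominated_convergence (𝓕 := atTop)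
    (f := fun (N : ℕ) (n : ℤ) => t n * qR Q (N + n) * qR Q (N - n))
    (g := fun n => t n * P⁻¹ * P⁻¹) (bound := fun n => ‖t n‖ * C * C)
    (((t_summable hQ hQ0 hz h0 ht).norm.mul_right _).mul_right _)
    (fun n => ((hRp n).const_mul _).mul (by simpa [sub_eq_add_neg] using hRp (-n)))
    (Eventually.of_forall fun N n => by
      rw [norm_mul, norm_mul]
      gcongr <;> apply hC)
  have key2 : Tendsto (fun N : ℕ => ∑' n : ℤ, t n * qR Q (N + n) * qR Q (N - n)) atTop
      (𝓝 ((∏' i : ℕ, (1 - z * Q ^ i)) * (∏' i : ℕ, (1 - (z⁻¹ * Q) * Q ^ i)) / P)) := by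
    have h2 : Tendsto (fun N : ℕ => N + N) atTop atTop := tendsto_atTop_mono (fun N => Nat.le_add_left N N) tendsto_id
    refine ((hA.mul hB).div (hP.comp h2) hne).congr fun N => ?_
    rw [(fin_jtp hQ hQ0 hz h0 ht N N).tsum_eq]
    simp only [Function.comp, pow_succ', mul_assoc, Pi.div_apply]
  have := tendsto_nhds_unique key key2
  rw [tsum_mul_right, tsum_mul_right] at this
  generalize (∏' i : ℕ, (1 - (z⁻¹ * Q) * Q ^ i)) = B at this ⊢
  field_simp at this
  rw [this]

noncomputable def th (m k : ℤ) (x : ℂ) (n : ℤ) : ℂ :=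
  (-1) ^ n * x ^ (m * (n * (n - 1) / 2) + k * n)

lemma two_tri (n : ℤ) : 2 * (n * (n - 1) / 2) = n * (n - 1) := by
  apply Int.mul_ediv_cancel'
  have := Int.even_mul_pred_self n
  exact this.two_dvd

lemma th_rec {x : ℂ} (hx0 : x ≠ 0) (m k n : ℤ) :
    th m k x (n + 1) = -(x ^ k) * (x ^ m) ^ n * th m k x n := by
  unfold th
  have h : m * ((n + 1) * (n + 1 - 1) / 2) + k * (n + 1)
      = k + m * n + (m * (n * (n - 1) / 2) + k * n) := by
    have h1 := two_tri (n + 1)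
    have h2 := two_tri n
    have h3 : (n + 1) * (n + 1 - 1) / 2 = n * (n - 1) / 2 + n := by linarith
    rw [h3]; ring
  rw [h, zpow_add₀ hx0, zpow_add₀ hx0, zpow_mul, zpow_add₀ (by norm_num : (-1 : ℂ) ≠ 0), zpow_one]
  ring

lemma th_zero (m k : ℤ) (x : ℂ) : th m k x 0 = 1 := by simp [th]

lemma pow_norm_lt {x : ℂ} (hx : ‖x‖ < 1) {m : ℕ} (hm : m ≠ 0) : ‖x ^ m‖ < 1 := by
  rw [norm_pow]; exact pow_lt_one₀ (norm_nonneg _) hx hm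

lemma th_summable {x : ℂ} (hx : ‖x‖ < 1) (hx0 : x ≠ 0) {m : ℕ} (hm : m ≠ 0) (k : ℤ) :
    Summable (th m k x) :=
  t_summable (Q := x ^ m) (z := x ^ k) (pow_norm_lt hx hm) (pow_ne_zero _ hx0)
    (zpow_ne_zero _ hx0) (th_zero _ _ _)
    (fun n => by rw [th_rec hx0, zpow_natCast])

lemma mult_lin {x : ℂ} (hx : ‖x‖ < 1) {m : ℕ} (hm : m ≠ 0) (k : ℕ) :
    Multipliable fun n : ℕ => (1 - x ^ (m * n + k)) := by
  refine (mult_one_sub (z := x ^ k) (pow_norm_lt hx hm)).congr fun n => ?_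
  rw [pow_add, pow_mul]; ring

lemma th_tsum {x : ℂ} (hx : ‖x‖ < 1) (hx0 : x ≠ 0) (m k l : ℕ) (hm : m ≠ 0) (hkl : k + l = m) :
    ∑' n, th m k x n =
      ∏' n : ℕ, (1 - x ^ (m * n + m)) * (1 - x ^ (m * n + k)) * (1 - x ^ (m * n + l)) := by
  rw [jtp (Q := x ^ m) (z := x ^ k) (pow_norm_lt hx hm) (pow_ne_zero _ hx0)
    (pow_ne_zero _ hx0) (th_zero _ _ _)
    (fun n => by rw [th_rec hx0, zpow_natCast, zpow_natCast])]
  rw [Multipliable.tprod_mul ((mult_lin hx hm m).mul (mult_lin hx hm k)) (mult_lin hx hm l),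
    Multipliable.tprod_mul (mult_lin hx hm m) (mult_lin hx hm k)]
  have e : (x ^ k)⁻¹ * x ^ m = x ^ l := by
    rw [← hkl, pow_add, inv_mul_cancel_left₀ (pow_ne_zero _ hx0)]
  rw [e]
  simp only [pow_add, pow_mul, mul_comm]

lemma th_tsum_zero {x : ℂ} (hx : ‖x‖ < 1) (hx0 : x ≠ 0) {m : ℕ} (hm : m ≠ 0) :
    ∑' n, th m 0 x n = 0 := by
  have := th_tsum hx hx0 m 0 m hm (by simp)
  rw [Nat.cast_zero] at this
  rw [this]
  exact (hasProd_zero_of_exists_eq_zero ⟨0, by simp⟩).tprod_eq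

lemma euler_split {x : ℂ} (hx : ‖x‖ < 1) (m : ℕ) [NeZero m] :
    eulerPhi x = ∏' n : ℕ, ∏ r : Fin m, (1 - x ^ (m * n + r + 1)) := by
  have h : Multipliable fun n : ℕ => (1 - x ^ (n + 1)) := by
    simpa using mult_lin hx one_ne_zero 1
  have h1 := (Equiv.hasProd_iff (Nat.divModEquiv m).symm).mpr h.hasProd
  have h2 := h1.prod_fiberwise (g := fun n => ∏ r : Fin m, (1 - x ^ (m * n + r + 1)))
    (fun n => by
      convert hasProd_fintype _ using 2
      simp [Function.comp, mul_comm])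
  exact h2.tprod_eq.symm

lemma euler_three {x : ℂ} (hx : ‖x‖ < 1) (hx0 : x ≠ 0) : eulerPhi x = ∑' n, th 3 1 x n := by
  rw [euler_split hx 3]
  have := th_tsum hx hx0 3 1 2 (by norm_num) (by norm_num)
  norm_num at this
  rw [this]
  apply tprod_congr
  intro n
  simp [Fin.prod_univ_three]
  ring

lemma fac_ne {y : ℂ} (hy : ‖y‖ < 1) (k l : ℕ) (hk : k ≠ 0) (hl : l ≠ 0) :
    ∏' n : ℕ, ((1 - y ^ (5 * n + k)) * (1 - y ^ (5 * n + l))) ≠ 0 := by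
  have h5 : (5 : ℕ) ≠ 0 := by norm_num
  rw [Multipliable.tprod_mul (mult_lin hy h5 k) (mult_lin hy h5 l)]
  have key : ∀ j : ℕ, j ≠ 0 → ∏' n : ℕ, (1 - y ^ (5 * n + j)) ≠ 0 := by
    intro j hj
    have := tprod_ne (Q := y ^ 5) (z := y ^ j) (pow_norm_lt hy h5) (fun i => by
      rw [← pow_mul, ← pow_add]; exact one_sub_ne hy (by omega))
    simpa only [← pow_mul, ← pow_add, add_comm] using this
  exact mul_ne_zero (key k hk) (key l hl)

lemma euler_five {x : ℂ} (hx : ‖x‖ < 1) (k l k' l' : ℕ) (hk : k ≠ 0) (hl : l ≠ 0)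
    (h : ∀ y : ℂ, ∀ n : ℕ, ∏ r : Fin 5, (1 - y ^ (5 * n + r + 1)) =
      ((1 - y ^ (5 * n + 5)) * (1 - y ^ (5 * n + k')) * (1 - y ^ (5 * n + l'))) *
      ((1 - y ^ (5 * n + k)) * (1 - y ^ (5 * n + l)))) :
    eulerPhi (x ^ 3) * ∏' n : ℕ, ((1 - (x ^ 3) ^ (5 * n + k)) * (1 - (x ^ 3) ^ (5 * n + l)))⁻¹ =
    ∏' n : ℕ, (1 - x ^ (15 * n + 15)) * (1 - x ^ (15 * n + 3 * k')) * (1 - x ^ (15 * n + 3 * l')) := by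
  have hy := pow_norm_lt hx (show 3 ≠ 0 by norm_num)
  have h5 : (5 : ℕ) ≠ 0 := by norm_num
  have hne := fac_ne hy k l hk hl
  have hm := (mult_lin hy h5 k).mul (mult_lin hy h5 l)
  rw [euler_split hy 5, tprod_congr (h (x ^ 3)), Multipliable.tprod_mul
    (((mult_lin hy h5 5).mul (mult_lin hy h5 k')).mul (mult_lin hy h5 l')) hm,
    Multipliable.tprod_inv₀ hm hne, mul_assoc, mul_inv_cancel₀ hne, mul_one]
  apply tprod_congr
  intro n
  simp only [← pow_mul]
  ring_nf

lemma th_mul {x : ℂ} (hx0 : x ≠ 0) (a b i j s c k l : ℤ)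
    (hs : ∃ d, a + b = i + j + s + 2 * d)
    (he : 3 * (a * (a - 1)) + 2 * a + (3 * (b * (b - 1)) + 2 * b) =
      2 * c + (15 * (i * (i - 1)) + 2 * k * i) + (15 * (j * (j - 1)) + 2 * l * j)) :
    th 3 1 x a * th 3 1 x b = ((-1) ^ s * x ^ c) * (th 15 k x i * th 15 l x j) := by
  unfold th
  have h1 : ((-1 : ℂ) ^ a) * (-1) ^ b = (-1) ^ s * ((-1) ^ i * (-1) ^ j) := by
    obtain ⟨d, hd⟩ := hs
    have hn : (-1 : ℂ) ≠ 0 := by norm_num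
    rw [← zpow_add₀ hn, ← zpow_add₀ hn, ← zpow_add₀ hn, hd, zpow_add₀ hn, zpow_mul]
    simp [add_comm]
  have h2 : x ^ (3 * (a * (a - 1) / 2) + 1 * a) * x ^ (3 * (b * (b - 1) / 2) + 1 * b) =
      x ^ c * (x ^ (15 * (i * (i - 1) / 2) + k * i) * x ^ (15 * (j * (j - 1) / 2) + l * j)) := by
    rw [← zpow_add₀ hx0, ← zpow_add₀ hx0, ← zpow_add₀ hx0]
    congr 1
    have := two_tri a
    have := two_tri b
    have := two_tri i
    have := two_tri j
    linarith
  linear_combination h1 * x ^ (3 * (a * (a - 1) / 2) + 1 * a) * x ^ (3 * (b * (b - 1) / 2) + 1 * b)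
    + (-1) ^ s * ((-1) ^ i * (-1) ^ j) * h2

def cls (p : Fin 5 × (ℤ × ℤ)) : ℤ × ℤ :=
  match p with
  | (0, (i, j)) => (2 * i - j, i + 2 * j)
  | (1, (i, j)) => (-2 * i + j, 1 - i - 2 * j)
  | (2, (i, j)) => (1 - 2 * i - j, -i + 2 * j)
  | (3, (i, j)) => (2 * i + j - 1, i - 2 * j)
  | (4, (i, j)) => (2 * i - j, i - 1 + 2 * j)

lemma cls_bij : Function.Bijective cls := by
  constructor
  · rintro ⟨r, i, j⟩ ⟨s, k, l⟩ h
    fin_cases r <;> fin_cases s <;> simp [cls] at h ⊢ <;> omega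
  · rintro ⟨m, n⟩
    have h : (2 * m + n) % 5 = 0 ∨ (2 * m + n) % 5 = 1 ∨ (2 * m + n) % 5 = 2 ∨
      (2 * m + n) % 5 = 3 ∨ (2 * m + n) % 5 = 4 := by omega
    rcases h with h | h | h | h | h
    · exact ⟨(0, ((2 * m + n) / 5, 2 * ((2 * m + n) / 5) - m)), by
        simp only [cls, Prod.mk.injEq]; omega⟩
    · exact ⟨(1, (-((2 * m + n) / 5), m - 2 * ((2 * m + n) / 5))), by
        simp only [cls, Prod.mk.injEq]; omega⟩
    · exact ⟨(2, (-((2 * m + n) / 5), 1 - m + 2 * ((2 * m + n) / 5))), by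
        simp only [cls, Prod.mk.injEq]; omega⟩
    · exact ⟨(3, ((2 * m + n) / 5 + 1, m - 1 - 2 * ((2 * m + n) / 5))), by
        simp only [cls, Prod.mk.injEq]; omega⟩
    · exact ⟨(4, ((2 * m + n) / 5 + 1, 2 * ((2 * m + n) / 5) + 2 - m)), by
        simp only [cls, Prod.mk.injEq]; omega⟩

lemma hs_congr' {f g : ℤ × ℤ → ℂ} {s : ℂ} (h : HasSum f s) (h1 : ∀ n, g n = f n) :
    HasSum g s := by
  rw [funext h1]; exact h

lemma main_theta {x : ℂ} (hx : ‖x‖ < 1) (hx0 : x ≠ 0) :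
    (∑' n, th 3 1 x n) ^ 2 =
      ((∑' n, th 15 7 x n) - x * ∑' n, th 15 2 x n) * (∑' n, th 15 6 x n)
      - x * ((∑' n, th 15 4 x n) + x * ∑' n, th 15 1 x n) * (∑' n, th 15 3 x n) := by
  have s3 : Summable fun n => ‖th 3 1 x n‖ := by
    exact_mod_cast (th_summable hx hx0 (m := 3) (by norm_num) 1).norm
  have s15 : ∀ k, Summable fun n => ‖th 15 k x n‖ := fun k => by
    exact_mod_cast (th_summable hx hx0 (m := 15) (by norm_num) k).norm
  have hz : ∑' n, th 15 0 x n = 0 := by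
    exact_mod_cast th_tsum_zero hx hx0 (m := 15) (by norm_num)
  have hS : Summable fun p : ℤ × ℤ => th 3 1 x p.1 * th 3 1 x p.2 :=
    summable_mul_of_summable_norm s3 s3
  rw [sq, tsum_mul_tsum_of_summable_norm s3 s3]
  have h1 := (Equiv.hasSum_iff (Equiv.ofBijective cls cls_bij)).mpr hS.hasSum
  have hF : ∀ (s c k l : ℤ), HasSum (fun p : ℤ × ℤ =>
      ((-1) ^ s * x ^ c) * (th 15 k x p.1 * th 15 l x p.2))
      (((-1) ^ s * x ^ c) * ((∑' n, th 15 k x n) * ∑' n, th 15 l x n)) := by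
    intro s c k l
    rw [tsum_mul_tsum_of_summable_norm (s15 k) (s15 l)]
    exact (summable_mul_of_summable_norm (s15 k) (s15 l)).hasSum.mul_left _
  have h2 := h1.prod_fiberwise (g := fun r => match r with
    | 0 => ((-1) ^ (0 : ℤ) * x ^ (0 : ℤ)) * ((∑' n, th 15 6 x n) * ∑' n, th 15 7 x n)
    | 1 => ((-1) ^ (1 : ℤ) * x ^ (1 : ℤ)) * ((∑' n, th 15 6 x n) * ∑' n, th 15 2 x n)
    | 2 => ((-1) ^ (1 : ℤ) * x ^ (1 : ℤ)) * ((∑' n, th 15 3 x n) * ∑' n, th 15 4 x n)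
    | 3 => ((-1) ^ (1 : ℤ) * x ^ (2 : ℤ)) * ((∑' n, th 15 0 x n) * ∑' n, th 15 5 x n)
    | 4 => ((-1) ^ (1 : ℤ) * x ^ (2 : ℤ)) * ((∑' n, th 15 3 x n) * ∑' n, th 15 1 x n))
    (fun r => by
      fin_cases r
      · refine hs_congr' (hF 0 0 6 7) fun p => ?_
        refine th_mul hx0 (2 * p.1 - p.2) (p.1 + 2 * p.2) _ _ _ _ _ _
          ⟨p.1, ?_⟩ ?_ <;> ring
      · refine hs_congr' (hF 1 1 6 2) fun p => ?_
        refine th_mul hx0 (-2 * p.1 + p.2) (1 - p.1 - 2 * p.2) _ _ _ _ _ _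
          ⟨-2 * p.1 - p.2, ?_⟩ ?_ <;> ring
      · refine hs_congr' (hF 1 1 3 4) fun p => ?_
        refine th_mul hx0 (1 - 2 * p.1 - p.2) (-p.1 + 2 * p.2) _ _ _ _ _ _
          ⟨-2 * p.1, ?_⟩ ?_ <;> ring
      · refine hs_congr' (hF 1 2 0 5) fun p => ?_
        refine th_mul hx0 (2 * p.1 + p.2 - 1) (p.1 - 2 * p.2) _ _ _ _ _ _
          ⟨p.1 - p.2 - 1, ?_⟩ ?_ <;> ring
      · refine hs_congr' (hF 1 2 3 1) fun p => ?_
        refine th_mul hx0 (2 * p.1 - p.2) (p.1 - 1 + 2 * p.2) _ _ _ _ _ _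
          ⟨p.1 - 1, ?_⟩ ?_ <;> ring)
  rw [← h2.tsum_eq, tsum_fintype, Fin.sum_univ_five]
  simp only [hz]
  simp
  ring

end RRed

theorem reduced_ramanujan_identity (q : ℂ) (hq : ‖q‖ < 1) :
    eulerPhi (q ^ 3) ^ 2 =
      Gf (q ^ 3) * eulerPhi (q ^ 9) * rrB (q ^ 9)
      - q ^ 3 * Hf (q ^ 3) * eulerPhi (q ^ 9) * rrA (q ^ 9) := by
  by_cases h0 : q = 0
  · subst h0
    simp [eulerPhi, Gf, Hf, rrA, rrB]
  have hx : ‖q ^ 3‖ < 1 := RRed.pow_norm_lt hq (by norm_num)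
  have hx0 : q ^ 3 ≠ 0 := pow_ne_zero _ h0
  rw [show q ^ 9 = (q ^ 3) ^ 3 by ring]
  generalize q ^ 3 = x at *
  have hB : eulerPhi (x ^ 3) * rrB (x ^ 3) = ∑' n, RRed.th 15 6 x n := by
    rw [rrB, RRed.euler_five hx 4 1 2 3 (by norm_num) (by norm_num)]
    · exact (RRed.th_tsum hx hx0 15 6 9 (by norm_num) (by norm_num)).symm
    · intro y n
      simp [Fin.prod_univ_five]
      ring
  have hA : eulerPhi (x ^ 3) * rrA (x ^ 3) = ∑' n, RRed.th 15 3 x n := by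
    rw [rrA, RRed.euler_five hx 3 2 1 4 (by norm_num) (by norm_num)]
    · exact (RRed.th_tsum hx hx0 15 3 12 (by norm_num) (by norm_num)).symm
    · intro y n
      simp [Fin.prod_univ_five]
      ring
  have hG : Gf x = (∑' n, RRed.th 15 7 x n) - x * ∑' n, RRed.th 15 2 x n := by
    have h7 := RRed.th_tsum hx hx0 15 7 8 (by norm_num) (by norm_num)
    have h2 := RRed.th_tsum hx hx0 15 2 13 (by norm_num) (by norm_num)
    push_cast at h7 h2
    rw [Gf, h7, h2]
    congr 1
    exact tprod_congr fun n => by ring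
  have hH : Hf x = (∑' n, RRed.th 15 4 x n) + x * ∑' n, RRed.th 15 1 x n := by
    have h7 := RRed.th_tsum hx hx0 15 4 11 (by norm_num) (by norm_num)
    have h2 := RRed.th_tsum hx hx0 15 1 14 (by norm_num) (by norm_num)
    push_cast at h7 h2
    rw [Hf, h7, h2]
    congr 1
    exact tprod_congr fun n => by ring
  rw [RRed.euler_three hx hx0, RRed.main_theta hx hx0, ← hG, ← hH, ← hA, ← hB]
  ring
end
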